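/- Let Γ be an admissible finite nonempty set of invertible n×n real matrices, let x₀ ∈ ℝⁿ with x₀ ≠ 0, and let Λ* ∈ Γ be a minimizer of x₀ᵀM_Λx₀ over Λ ∈ Γ. Then Ψ(Λ* x₀; S₀) < Ψ(x₀; S₀), where Ψ denotes the gauge (Minkowski functional); equivalently, (Λ* x₀)ᵀM₀(Λ* x₀) < x₀ᵀM₀x₀. -/

import Mathlib

open Matrix Set Filter Topology Pointwise

noncomputable section

/-- The quadratic form `xᵀ M x`. -/
def quadForm {n : ℕ} (M : Matrix (Fin n) (Fin n) ℝ) (x : Fin n → ℝ) : ℝ :=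
  x ⬝ᵥ M.mulVec x

/-- The ellipsoid `{x : xᵀ M x ≤ 1}`. -/
def ellipsoid {n : ℕ} (M : Matrix (Fin n) (Fin n) ℝ) : Set (Fin n → ℝ) :=
  {x | quadForm M x ≤ 1}

/-- `S*_Γ = ⋃_{Λ ∈ Γ} S_Λ` where `S_Λ = {x : xᵀ (ΛᵀM₀Λ) x ≤ 1}`. -/
def SStar {n : ℕ} (M₀ : Matrix (Fin n) (Fin n) ℝ)
    (Γ : Finset (Matrix (Fin n) (Fin n) ℝ)) : Set (Fin n → ℝ) :=
  ⋃ Λ ∈ Γ, ellipsoid (Λᵀ * M₀ * Λ)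

/-- The gauge (Minkowski functional) `Ψ(x;S) = inf {α : α ≥ 0 ∧ x ∈ α • S}`. -/
def gaugeFn {n : ℕ} (S : Set (Fin n → ℝ)) (x : Fin n → ℝ) : ℝ :=
  sInf {α : ℝ | 0 ≤ α ∧ x ∈ α • S}

lemma quadForm_smul' {n : ℕ} (M : Matrix (Fin n) (Fin n) ℝ) (t : ℝ) (x : Fin n → ℝ) :
    quadForm M (t • x) = t ^ 2 * quadForm M x := by
  simp only [quadForm, Matrix.mulVec_smul, smul_dotProduct, dotProduct_smul, smul_eq_mul]
  ring

lemma quadForm_conj {n : ℕ} (M L : Matrix (Fin n) (Fin n) ℝ) (x : Fin n → ℝ) :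
    quadForm (Lᵀ * M * L) x = quadForm M (L.mulVec x) := by
  simp only [quadForm, ← Matrix.mulVec_mulVec]
  rw [Matrix.dotProduct_mulVec, Matrix.vecMul_transpose]

lemma quadForm_pos {n : ℕ} {M : Matrix (Fin n) (Fin n) ℝ} (hM : M.PosDef) {x : Fin n → ℝ}
    (hx : x ≠ 0) : 0 < quadForm M x := by
  simpa [quadForm] using hM.dotProduct_mulVec_pos hx

lemma quadForm_nonneg {n : ℕ} {M : Matrix (Fin n) (Fin n) ℝ} (hM : M.PosDef) (x : Fin n → ℝ) :
    0 ≤ quadForm M x := by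
  by_cases hx : x = 0
  · simp [hx, quadForm]
  · exact (quadForm_pos hM hx).le

lemma gaugeFn_eq {n : ℕ} {M : Matrix (Fin n) (Fin n) ℝ} (hM : M.PosDef) (x : Fin n → ℝ) :
    gaugeFn (ellipsoid M) x = Real.sqrt (quadForm M x) := by
  have h : {α : ℝ | 0 ≤ α ∧ x ∈ α • ellipsoid M} = Set.Ici (Real.sqrt (quadForm M x)) := by
    ext a
    simp only [Set.mem_ofPred_eq, Set.mem_Ici]
    constructor
    · rintro ⟨ha, y, hy, rfl⟩
      have hy1 : quadForm M y ≤ 1 := hy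
      refine (Real.sqrt_le_left ha).2 ?_
      change quadForm M (a • y) ≤ _
      rw [quadForm_smul']
      nlinarith [sq_nonneg a]
    · intro h
      have ha : 0 ≤ a := (Real.sqrt_nonneg _).trans h
      have h2 := (Real.sqrt_le_left ha).1 h
      refine ⟨ha, ?_⟩
      rcases ha.eq_or_lt with h0 | h0
      · have hx : x = 0 := by
          by_contra hx
          have := quadForm_pos hM hx
          rw [← h0] at h2
          norm_num at h2
          linarith
        exact ⟨0, by simp [ellipsoid, quadForm], by simp [hx]⟩
      · refine ⟨a⁻¹ • x, ?_, smul_inv_smul₀ h0.ne' x⟩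
        change quadForm M (a⁻¹ • x) ≤ 1
        rw [quadForm_smul', inv_pow, inv_mul_le_iff₀ (by positivity)]
        linarith
  rw [gaugeFn, h, csInf_Ici]

/-- Lemma C.2, item 2: if Γ is admissible, x₀ ≠ 0 and Λ* minimizes
x₀ᵀM_Λx₀ over Λ ∈ Γ, then Ψ(Λ*x₀; S₀) < Ψ(x₀; S₀); equivalently
(Λ*x₀)ᵀM₀(Λ*x₀) < x₀ᵀM₀x₀. -/
theorem stmt9 {n : ℕ} (hn : 0 < n)
    (M₀ : Matrix (Fin n) (Fin n) ℝ) (hM₀ : M₀.PosDef)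
    (Γ : Finset (Matrix (Fin n) (Fin n) ℝ)) (hΓ : Γ.Nonempty)
    (hinv : ∀ Λ ∈ Γ, IsUnit Λ.det)
    (hadm : ellipsoid M₀ ⊆ interior (SStar M₀ Γ))
    (x₀ : Fin n → ℝ) (hx₀ : x₀ ≠ 0)
    (Λs : Matrix (Fin n) (Fin n) ℝ) (hΛs : Λs ∈ Γ)
    (hmin : ∀ Λ ∈ Γ, quadForm (Λsᵀ * M₀ * Λs) x₀ ≤ quadForm (Λᵀ * M₀ * Λ) x₀) :
    gaugeFn (ellipsoid M₀) (Λs.mulVec x₀) < gaugeFn (ellipsoid M₀) x₀ ∧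
    quadForm M₀ (Λs.mulVec x₀) < quadForm M₀ x₀ := by
  have hc := quadForm_pos hM₀ hx₀
  have key : quadForm M₀ (Λs.mulVec x₀) < quadForm M₀ x₀ := by
    set c := quadForm M₀ x₀ with hcdef
    set s := Real.sqrt c with hs
    have hs0 : 0 < s := Real.sqrt_pos.2 hc
    have hsq : s ^ 2 = c := Real.sq_sqrt hc.le
    have hy : s⁻¹ • x₀ ∈ ellipsoid M₀ := by
      change quadForm M₀ (s⁻¹ • x₀) ≤ 1
      rw [quadForm_smul', inv_pow, hsq, ← hcdef, inv_mul_cancel₀ hc.ne']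
    have hcont : Tendsto (fun t : ℝ => t • (s⁻¹ • x₀)) (𝓝[>] 1) (𝓝 (s⁻¹ • x₀)) := by
      have : Continuous (fun t : ℝ => t • (s⁻¹ • x₀)) := by fun_prop
      have h1 := this.tendsto 1
      rw [one_smul] at h1
      exact h1.mono_left nhdsWithin_le_nhds
    have hev := hcont.eventually_mem (mem_interior_iff_mem_nhds.1 (hadm hy))
    obtain ⟨t, ht, ht1⟩ := (hev.and self_mem_nhdsWithin).exists
    have ht1 : 1 < t := ht1
    change t • (s⁻¹ • x₀) ∈ SStar M₀ Γ at ht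
    simp only [SStar, Set.mem_iUnion] at ht
    obtain ⟨L, hL, hm⟩ := ht
    have hm : quadForm (Lᵀ * M₀ * L) (t • (s⁻¹ • x₀)) ≤ 1 := hm
    rw [quadForm_smul', quadForm_smul', inv_pow, hsq] at hm
    have h1 := hmin L hL
    rw [quadForm_conj M₀ Λs] at h1
    have h2 : t ^ 2 * quadForm (Lᵀ * M₀ * L) x₀ ≤ c := by
      have := mul_le_mul_of_nonneg_left hm hc.le
      field_simp at this
      linarith
    have h3 := quadForm_nonneg hM₀ (Λs.mulVec x₀)
    by_contra hcon
    push Not at hcon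
    have : 1 < t ^ 2 := by nlinarith
    nlinarith
  refine ⟨?_, key⟩
  rw [gaugeFn_eq hM₀, gaugeFn_eq hM₀]
  exact Real.sqrt_lt_sqrt (quadForm_nonneg hM₀ _) key
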